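/- Let k ≥ 2 be an integer and define the polynomial Q_k(z) = ((2π)^{2k−1}/(2k)!) ∑_{j=0}^{k} (−1)^j B_{2j} B_{2k−2j} (2^{2j}−1)(2^{2k−2j}−1) C(2k,2j) z^{2j} + ζ(2k−1)(2^{2k−1}−1)((−1)^k z + z^{2k−1}). Then every non-zero complex root of Q_k lies on the unit circle (has absolute value 1), and all roots of Q_k are simple. -/

import Mathlib

/-- `zetaVal m = ∑_{n=1}^∞ n^{−m}`, the value of the Riemann zeta function
at the integer `m`. -/
noncomputable def zetaVal (m : ℕ) : ℝ := ∑' n : ℕ, 1 / ((n : ℝ) + 1) ^ m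

/-- The polynomial
`Q_k(z) = ((2π)^{2k−1}/(2k)!) ∑_{j=0}^{k} (−1)^j B_{2j} B_{2k−2j}
(2^{2j}−1)(2^{2k−2j}−1) C(2k,2j) z^{2j} + ζ(2k−1)(2^{2k−1}−1)((−1)^k z + z^{2k−1})`,
viewed as a polynomial over `ℂ`. -/
noncomputable def Qpoly (k : ℕ) : Polynomial ℂ :=
  Polynomial.C ((((2 * Real.pi) ^ (2 * k - 1) / (Nat.factorial (2 * k))) : ℝ) : ℂ) *
    ∑ j ∈ Finset.range (k + 1),
      Polynomial.C ((-1 : ℂ) ^ j * ((bernoulli (2 * j) : ℚ) : ℂ)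
        * ((bernoulli (2 * k - 2 * j) : ℚ) : ℂ)
        * ((2 : ℂ) ^ (2 * j) - 1) * ((2 : ℂ) ^ (2 * k - 2 * j) - 1)
        * ((Nat.choose (2 * k) (2 * j)) : ℂ)) * Polynomial.X ^ (2 * j)
  + Polynomial.C ((zetaVal (2 * k - 1) : ℂ) * ((2 : ℂ) ^ (2 * k - 1) - 1)) *
      (Polynomial.C ((-1 : ℂ) ^ k) * Polynomial.X + Polynomial.X ^ (2 * k - 1))

/-!
Since `B_{2j} (2^{2j} - 1)` is an elementary multiple of `λ(2j) = ∑ (2n+1)^{-2j}`, the polynomial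
`Q_k` is, up to a constant, `λ(2k-1) (z ± z^{2k-1}) + (4/π) ∑ (-1)^j λ(2j) λ(2k-2j) z^{2j}`.
Multiplying by `1 + z^2` turns its coefficients into differences of consecutive products, which
decay geometrically, and the result is `z (h ± h*)`, where `h*` is the conjugate reciprocal of `h`
and `h` is close to `2 (1 + z^2) / (exp (π z) + 1)`. For `k ≥ 4` this `h` has no zero in the closed
unit disc, which is checked numerically with an approximate inverse of `h`. For `k = 2` and `k = 3`
other multipliers lead to a linear polynomial in place of `h`.

If `f` has no zero in the closed unit disc and degree less than `N`, then its conjugate reciprocal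
`f*` in degree `N` satisfies `|f*| < |f|` inside the unit circle and `|f*| > |f|` outside, so for
`|ε| = 1` the roots of `f + ε f*` lie on the circle. At a double root on the circle the real part of
`z f' / f` would be `N / 2`, whereas it is at most `deg f / 2` because every root of `f` has modulus
at least `1`.
-/

open Polynomial hiding bernoulli
open ComplexConjugate Real

section SelfInversive

lemma eval_reflect {K : Type*} [Field K] {f : K[X]} {N : ℕ} (hf : f.natDegree ≤ N) {z : K}
    (hz : z ≠ 0) : (f.reflect N).eval z = z ^ N * f.eval z⁻¹ := by
  let := invertibleOfNonzero (inv_ne_zero hz)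
  have h := eval₂_reflect_mul_pow (RingHom.id K) z⁻¹ N f hf
  simp only [invOf_eq_inv, inv_inv, inv_pow, eval₂_id] at h
  rw [← h]
  field_simp

lemma X_mul_derivative_reflect {R : Type*} [CommRing R] {f : R[X]} {N : ℕ}
    (hf : f.natDegree ≤ N) :
    X * derivative (f.reflect N) = (N : R[X]) * f.reflect N - (X * derivative f).reflect N := by
  have coeff_X_mul_derivative (p : R[X]) (i : ℕ) :
      (X * derivative p).coeff i = i * p.coeff i := by
    cases i with
    | zero => simp
    | succ i => rw [coeff_X_mul, coeff_derivative]; push_cast; ring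
  ext i
  rw [coeff_X_mul_derivative, coeff_sub, coeff_natCast_mul, coeff_reflect, coeff_reflect,
    coeff_X_mul_derivative]
  rcases le_or_gt i N with hi | hi
  · rw [revAt_le hi, Nat.cast_sub hi]; ring
  · rw [revAt_eq_self_of_lt hi, coeff_eq_zero_of_natDegree_lt (hf.trans_lt hi)]; simp

/-- The conjugate-reciprocal polynomial `f*(z) = z ^ N * conj (f (1 / conj z))` of a polynomial `f`
regarded as having formal degree `N`. It is bundled as an additive map so that `map_add` and
`map_sum` apply. For `N < f.natDegree` the coefficients of index above `N` are only conjugated. -/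
noncomputable def conjReflect (N : ℕ) : ℂ[X] →+ ℂ[X] where
  toFun f := (f.map (starRingEnd ℂ)).reflect N
  map_zero' := by simp
  map_add' f g := by rw [Polynomial.map_add, reflect_add]

variable {f : ℂ[X]} {N : ℕ} {z : ℂ}

lemma conjReflect_apply (N : ℕ) (f : ℂ[X]) :
    conjReflect N f = (f.map (starRingEnd ℂ)).reflect N := rfl

lemma conjReflect_C_mul_X_pow {n : ℕ} (h : n ≤ N) (a : ℂ) :
    conjReflect N (C a * X ^ n) = C (conj a) * X ^ (N - n) := by
  rw [conjReflect_apply, Polynomial.map_mul, Polynomial.map_pow, map_C, map_X,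
    reflect_C_mul_X_pow, revAt_le h]

lemma eval_conjReflect (hf : f.natDegree ≤ N) (hz : z ≠ 0) :
    (conjReflect N f).eval z = z ^ N * conj (f.eval (conj z)⁻¹) := by
  rw [conjReflect_apply, eval_reflect (natDegree_map_le.trans hf) hz,
    ← eval_map_apply, map_inv₀, Complex.conj_conj]

lemma X_mul_derivative_conjReflect (hf : f.natDegree ≤ N) :
    X * derivative (conjReflect N f) =
      (N : ℂ[X]) * conjReflect N f - conjReflect N (X * derivative f) := by
  simp only [conjReflect_apply]
  rw [X_mul_derivative_reflect (natDegree_map_le.trans hf), derivative_map, Polynomial.map_mul,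
    map_X]

lemma norm_one_sub_conj_mul_le {z r : ℂ} (hz : ‖z‖ ≤ 1) (hr : 1 ≤ ‖r‖) :
    ‖1 - conj z * r‖ ≤ ‖z - r‖ := by
  have hdiff : ‖z - r‖ ^ 2 - ‖1 - conj z * r‖ ^ 2 = (1 - ‖z‖ ^ 2) * (‖r‖ ^ 2 - 1) := by
    simp only [← Complex.normSq_eq_norm_sq, Complex.normSq_apply, Complex.sub_re, Complex.sub_im,
      Complex.mul_re, Complex.mul_im, Complex.conj_re, Complex.conj_im, Complex.one_re,
      Complex.one_im]
    ring
  have hprod : 0 ≤ (1 - ‖z‖ ^ 2) * (‖r‖ ^ 2 - 1) :=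
    mul_nonneg (sub_nonneg.2 (pow_le_one₀ (norm_nonneg z) hz)) (sub_nonneg.2 (one_le_pow₀ hr))
  exact (sq_le_sq₀ (norm_nonneg _) (norm_nonneg _)).1 (by linarith)

lemma norm_pow_natDegree_mul_norm_eval_inv_conj_le (hroots : ∀ r ∈ f.roots, 1 ≤ ‖r‖)
    (hz : ‖z‖ ≤ 1) (hz0 : z ≠ 0) :
    ‖z‖ ^ f.natDegree * ‖f.eval (conj z)⁻¹‖ ≤ ‖f.eval z‖ := by
  have hf := IsAlgClosed.splits f
  have norm_eval (w : ℂ) :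
      ‖f.eval w‖ = ‖f.leadingCoeff‖ * (f.roots.map fun r => ‖w - r‖).prod := by
    rw [hf.eval_eq_prod_roots, norm_mul]
    congr 1
    exact (map_multiset_prod (normHom (α := ℂ)) _).trans (by rw [Multiset.map_map]; rfl)
  have hfactor (r : ℂ) : ‖z‖ * ‖(conj z)⁻¹ - r‖ = ‖1 - conj z * r‖ := by
    rw [← Complex.norm_conj z, ← norm_mul, mul_sub, mul_inv_cancel₀ (by simpa using hz0)]
  calc ‖z‖ ^ f.natDegree * ‖f.eval (conj z)⁻¹‖
      = ‖f.leadingCoeff‖ * (f.roots.map fun r => ‖1 - conj z * r‖).prod := by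
        simp only [norm_eval, hf.natDegree_eq_card_roots, ← hfactor, Multiset.prod_map_mul,
          Multiset.map_const', Multiset.prod_replicate]
        ring
    _ ≤ ‖f.leadingCoeff‖ * (f.roots.map fun r => ‖z - r‖).prod := by
        gcongr
        exact Multiset.prod_map_le_prod_map₀ _ _ (fun _ _ => norm_nonneg _)
          fun r hr => norm_one_sub_conj_mul_le hz (hroots r hr)
    _ = ‖f.eval z‖ := (norm_eval z).symm

lemma one_lt_norm_of_mem_roots (hroots : ∀ z, ‖z‖ ≤ 1 → f.eval z ≠ 0) {r : ℂ}
    (hr : r ∈ f.roots) : 1 < ‖r‖ :=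
  not_le.1 fun h => hroots r h (isRoot_of_mem_roots hr)

lemma eval_zero_conjReflect (hN : f.natDegree < N) : (conjReflect N f).eval 0 = 0 := by
  rw [← coeff_zero_eq_eval_zero, conjReflect_apply, coeff_reflect, revAt_zero, coeff_map,
    coeff_eq_zero_of_natDegree_lt hN, map_zero]

lemma norm_eval_conjReflect_lt (hN : f.natDegree < N) (hroots : ∀ z, ‖z‖ ≤ 1 → f.eval z ≠ 0)
    (hz : ‖z‖ < 1) : ‖(conjReflect N f).eval z‖ < ‖f.eval z‖ := by
  have hpos : 0 < ‖f.eval z‖ := norm_pos_iff.2 (hroots z hz.le)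
  rcases eq_or_ne z 0 with rfl | hz0
  · rwa [eval_zero_conjReflect hN, norm_zero]
  · obtain ⟨d, rfl⟩ := Nat.exists_eq_add_of_lt hN
    rw [eval_conjReflect hN.le hz0, norm_mul, norm_pow, Complex.norm_conj]
    calc ‖z‖ ^ (f.natDegree + d + 1) * ‖f.eval (conj z)⁻¹‖
        = ‖z‖ ^ (d + 1) * (‖z‖ ^ f.natDegree * ‖f.eval (conj z)⁻¹‖) := by ring
      _ ≤ ‖z‖ ^ (d + 1) * ‖f.eval z‖ := by
        gcongr
        exact norm_pow_natDegree_mul_norm_eval_inv_conj_le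
          (fun r hr => (one_lt_norm_of_mem_roots hroots hr).le) hz.le hz0
      _ < ‖f.eval z‖ :=
        mul_lt_of_lt_one_left hpos (pow_lt_one₀ (norm_nonneg z) hz d.succ_ne_zero)

lemma norm_eval_lt_norm_eval_conjReflect (hN : f.natDegree < N)
    (hroots : ∀ z, ‖z‖ ≤ 1 → f.eval z ≠ 0) (hz : 1 < ‖z‖) :
    ‖f.eval z‖ < ‖(conjReflect N f).eval z‖ := by
  have hpos : 0 < ‖z‖ := one_pos.trans hz
  have hz0 : z ≠ 0 := norm_pos_iff.1 hpos
  have hw0 : (conj z)⁻¹ ≠ 0 := by simpa using hz0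
  have hw : ‖(conj z)⁻¹‖ < 1 := by
    rw [norm_inv, Complex.norm_conj]; exact inv_lt_one_of_one_lt₀ hz
  have h := norm_eval_conjReflect_lt hN hroots hw
  rw [eval_conjReflect hN.le hw0, map_inv₀, Complex.conj_conj, inv_inv, norm_mul, norm_pow,
    norm_inv, Complex.norm_conj, Complex.norm_conj, inv_pow,
    inv_mul_lt_iff₀ (pow_pos hpos N)] at h
  rwa [eval_conjReflect hN.le hz0, norm_mul, norm_pow, Complex.norm_conj]

theorem norm_eq_one_of_eval_add_conjReflect_eq_zero {ε : ℂ} (hε : ‖ε‖ = 1)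
    (hN : f.natDegree < N) (hroots : ∀ z, ‖z‖ ≤ 1 → f.eval z ≠ 0)
    (hz : (f + C ε * conjReflect N f).eval z = 0) : ‖z‖ = 1 := by
  have hnorm : ‖f.eval z‖ = ‖(conjReflect N f).eval z‖ := by
    rw [eval_add, eval_C_mul] at hz
    rw [eq_neg_of_add_eq_zero_left hz, norm_neg, norm_mul, hε, one_mul]
  rcases lt_trichotomy ‖z‖ 1 with h | h | h
  · exact absurd hnorm (norm_eval_conjReflect_lt hN hroots h).ne'
  · exact h
  · exact absurd hnorm (norm_eval_lt_norm_eval_conjReflect hN hroots h).ne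

lemma re_div_sub_le_half {z r : ℂ} (h : ‖z‖ ≤ ‖r‖) : (z / (z - r)).re ≤ 1 / 2 := by
  rcases eq_or_ne z r with rfl | hne
  · simp
  have hpos : 0 < Complex.normSq (z - r) := Complex.normSq_pos.2 (sub_ne_zero.2 hne)
  have hsq : ‖z‖ ^ 2 ≤ ‖r‖ ^ 2 := by gcongr
  simp only [← Complex.normSq_eq_norm_sq, Complex.normSq_apply] at hsq
  rw [Complex.div_re, ← add_div, div_le_div_iff₀ hpos two_pos, Complex.normSq_apply]
  simp only [Complex.sub_re, Complex.sub_im]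
  nlinarith

lemma re_mul_derivative_div_eval_le (hz : f.eval z ≠ 0) (hroots : ∀ r ∈ f.roots, ‖z‖ ≤ ‖r‖) :
    (z * f.derivative.eval z / f.eval z).re ≤ f.natDegree / 2 := by
  have hf := IsAlgClosed.splits f
  have hsum : z * f.derivative.eval z / f.eval z = (f.roots.map fun r => z / (z - r)).sum := by
    simp only [mul_div_assoc, hf.eval_derivative_div_eval_of_ne_zero hz,
      ← Multiset.sum_map_mul_left, mul_one_div]
  calc (z * f.derivative.eval z / f.eval z).re
      = (f.roots.map fun r => (z / (z - r)).re).sum := by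
        rw [hsum]
        exact (map_multiset_sum Complex.reAddGroupHom _).trans (by rw [Multiset.map_map]; rfl)
    _ ≤ (f.roots.map fun r => (z / (z - r)).re).card • (1 / 2 : ℝ) := by
        refine Multiset.sum_le_card_nsmul _ _ fun x hx => ?_
        obtain ⟨r, hr, rfl⟩ := Multiset.mem_map.1 hx
        exact re_div_sub_le_half (hroots r hr)
    _ = f.natDegree / 2 := by
        rw [Multiset.card_map, ← hf.natDegree_eq_card_roots, nsmul_eq_mul, mul_one_div]

theorem separable_add_conjReflect {ε : ℂ} (hε : ‖ε‖ = 1) (hN : f.natDegree < N)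
    (hroots : ∀ z, ‖z‖ ≤ 1 → f.eval z ≠ 0) : (f + C ε * conjReflect N f).Separable := by
  rw [Separable, isCoprime_iff_aeval_ne_zero_of_isAlgClosed ℂ ℂ]
  intro z
  by_contra! h
  simp only [coe_aeval_eq_eval] at h
  obtain ⟨hP, hP'⟩ := h
  have hz : ‖z‖ = 1 := norm_eq_one_of_eval_add_conjReflect_eq_zero hε hN hroots hP
  have hz0 : z ≠ 0 := norm_pos_iff.1 (hz ▸ one_pos)
  have hinv : (conj z)⁻¹ = z := by rw [← Complex.inv_eq_conj hz, inv_inv]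
  have hdeg : (X * derivative f).natDegree ≤ N := by
    have := natDegree_mul_le (p := (X : ℂ[X])) (q := derivative f)
    have := natDegree_derivative_le f
    have := natDegree_X_le (R := ℂ)
    omega
  have hreflect := congrArg (eval z) (X_mul_derivative_conjReflect hN.le)
  simp only [eval_add, eval_sub, eval_mul, eval_C, eval_X, eval_natCast, derivative_add,
    derivative_C_mul, eval_conjReflect hN.le hz0, eval_conjReflect hdeg hz0, hinv, map_mul]
    at hP hP' hreflect
  have hA : f.eval z ≠ 0 := hroots z hz.le
  have hA' : conj (f.eval z) ≠ 0 := by simpa using hA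
  have htwo : z * (derivative f).eval z / f.eval z +
      conj (z * (derivative f).eval z / f.eval z) = N := by
    simp only [map_div₀, map_mul]
    field_simp
    linear_combination conj (f.eval z) * (z * hP' - ε * hreflect) +
      (conj z * conj ((derivative f).eval z) - N * conj (f.eval z)) * hP
  have hre := re_mul_derivative_div_eval_le hA fun r hr =>
    hz.trans_le (one_lt_norm_of_mem_roots hroots hr).le
  have hreal := congrArg Complex.re htwo
  rw [Complex.add_re, Complex.conj_re, Complex.natCast_re] at hreal
  have : (f.natDegree : ℝ) < N := by exact_mod_cast hN
  linarith

theorem separable_X_mul_add_conjReflect {ε : ℂ} (hε : ‖ε‖ = 1) (hN : f.natDegree < N)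
    (hroots : ∀ z, ‖z‖ ≤ 1 → f.eval z ≠ 0) : (X * (f + C ε * conjReflect N f)).Separable := by
  refine separable_X.mul (separable_add_conjReflect hε hN hroots) ?_
  rw [isCoprime_iff_aeval_ne_zero_of_isAlgClosed ℂ ℂ]
  intro z
  rw [or_iff_not_imp_left, not_not, aeval_X]
  rintro rfl
  simpa [eval_zero_conjReflect hN] using hroots 0 (by simp)

end SelfInversive

section DirichletLambda

/-- The Dirichlet lambda function `λ(s) = ∑_{n odd} n ^ (-s) = (1 - 2 ^ (-s)) ζ(s)` at an integer
`s ≥ 2`. At `s = 0` the series diverges and `tsum` returns `0`, which happens to be the value of the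
analytic continuation; this is what makes the formulas below hold for the extreme terms of `Q_k`. -/
noncomputable def dirichletLambda (s : ℕ) : ℝ := ∑' n : ℕ, 1 / (2 * (n : ℝ) + 1) ^ s

variable {s : ℕ}

lemma dirichletLambda_zero : dirichletLambda 0 = 0 := by
  simp [dirichletLambda]

lemma summable_one_div_odd_pow (hs : 1 < s) :
    Summable fun n : ℕ => 1 / (2 * (n : ℝ) + 1) ^ s := by
  refine ((Real.summable_one_div_nat_pow.2 hs).comp_injective
    (i := fun n : ℕ => 2 * n + 1) fun a b => by simp).congr fun n => ?_
  simp

lemma hasSum_zetaVal (hs : 1 < s) : HasSum (fun n : ℕ => 1 / (n : ℝ) ^ s) (zetaVal s) := by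
  have h := Real.summable_one_div_nat_pow.2 hs
  convert h.hasSum using 1
  rw [h.tsum_eq_zero_add, Nat.cast_zero, zero_pow (by omega), div_zero, zero_add, zetaVal]
  simp only [Nat.cast_add, Nat.cast_one]

lemma zetaVal_mul_two_pow_sub_one (hs : 1 < s) :
    zetaVal s * (2 ^ s - 1) = 2 ^ s * dirichletLambda s := by
  have heven : (fun n : ℕ => 1 / ((2 * n : ℕ) : ℝ) ^ s) =
      fun n : ℕ => (1 / 2 ^ s) * (1 / (n : ℝ) ^ s) := by
    funext n; push_cast; rw [mul_pow]; field_simp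
  have hodd : (fun n : ℕ => 1 / ((2 * n + 1 : ℕ) : ℝ) ^ s) =
      fun n : ℕ => 1 / (2 * (n : ℝ) + 1) ^ s := by
    funext n; push_cast; rfl
  have hsplit := tsum_even_add_odd (f := fun n : ℕ => 1 / (n : ℝ) ^ s)
    (heven ▸ (hasSum_zetaVal hs).summable.mul_left _) (hodd ▸ summable_one_div_odd_pow hs)
  rw [heven, hodd, tsum_mul_left, (hasSum_zetaVal hs).tsum_eq, ← dirichletLambda] at hsplit
  field_simp at hsplit
  linarith

lemma dirichletLambda_two : dirichletLambda 2 = π ^ 2 / 8 := by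
  have h := zetaVal_mul_two_pow_sub_one one_lt_two
  rw [(hasSum_zetaVal one_lt_two).unique hasSum_zeta_two] at h
  linarith

lemma dirichletLambda_four : dirichletLambda 4 = π ^ 4 / 96 := by
  have h4 : 1 < 4 := by norm_num
  have h := zetaVal_mul_two_pow_sub_one h4
  rw [(hasSum_zetaVal h4).unique hasSum_zeta_four] at h
  linarith

lemma bernoulli_mul_two_pow_sub_one (j : ℕ) :
    (bernoulli (2 * j) : ℝ) * (2 ^ (2 * j) - 1) =
      (-1) ^ (j + 1) * 2 * (2 * j).factorial * dirichletLambda (2 * j) / π ^ (2 * j) := by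
  rcases eq_or_ne j 0 with rfl | hj
  · simp [dirichletLambda_zero]
  have hs : 1 < 2 * j := by omega
  have h := zetaVal_mul_two_pow_sub_one hs
  rw [(hasSum_zetaVal hs).unique (hasSum_zeta_nat hj)] at h
  have hpow : (2 : ℝ) ^ (2 * j) = 2 * 2 ^ (2 * j - 1) := by rw [← pow_succ']; congr 1; omega
  have hsign : ((-1 : ℝ) ^ (j + 1)) * (-1) ^ (j + 1) = 1 := by simp [← mul_pow]
  have h2 : (2 : ℝ) ^ (2 * j - 1) ≠ 0 := by positivity
  generalize (2 : ℝ) ^ (2 * j) - 1 = y at *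
  rw [hpow] at h
  field_simp at h ⊢
  linear_combination (-1) ^ (j + 1) * h - π ^ (2 * j) * (bernoulli (2 * j) : ℝ) * y * hsign

lemma hasSum_dirichletLambda_sub_one (hs : 1 < s) :
    HasSum (fun n : ℕ => 1 / (2 * (n : ℝ) + 3) ^ s) (dirichletLambda s - 1) := by
  have h := (hasSum_nat_add_iff' 1).2 (summable_one_div_odd_pow hs).hasSum
  simp only [Finset.sum_range_one, Nat.cast_zero, mul_zero, zero_add, one_pow, div_one] at h
  have hshift : (fun n : ℕ => 1 / (2 * (n : ℝ) + 3) ^ s) =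
      fun n : ℕ => 1 / (2 * ((n + 1 : ℕ) : ℝ) + 1) ^ s := by
    funext n; push_cast; ring_nf
  rwa [hshift]

lemma one_le_dirichletLambda (hs : 1 < s) : 1 ≤ dirichletLambda s :=
  sub_nonneg.1 ((hasSum_dirichletLambda_sub_one hs).nonneg fun n => by positivity)

lemma dirichletLambda_add_sub_one_le (hs : 1 < s) (t : ℕ) :
    dirichletLambda (s + t) - 1 ≤ (dirichletLambda s - 1) / 3 ^ t := by
  refine hasSum_le (fun n => ?_) (hasSum_dirichletLambda_sub_one (by omega))
    ((hasSum_dirichletLambda_sub_one hs).div_const (3 ^ t))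
  rw [pow_add, div_div]
  gcongr
  linarith [n.cast_nonneg (α := ℝ)]

lemma dirichletLambda_four_mem_Icc : dirichletLambda 4 ∈ Set.Icc 1.0145 1.0147 := by
  have hlo : (3.1415 : ℝ) ^ 4 ≤ π ^ 4 := by gcongr; exact pi_gt_d4.le
  have hhi : π ^ 4 ≤ (3.1416 : ℝ) ^ 4 := by gcongr; exact pi_lt_d4.le
  rw [dirichletLambda_four]
  constructor <;> linarith

lemma dirichletLambda_le {m : ℕ} (h : 2 * m + 4 ≤ s) :
    dirichletLambda s ≤ 1 + 0.0147 * (1 / 9) ^ m := by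
  obtain ⟨t, rfl⟩ := Nat.exists_eq_add_of_le h
  have hdecay := dirichletLambda_add_sub_one_le (s := 4) (by norm_num) (2 * m + t)
  have hbase : (dirichletLambda 4 - 1) / 3 ^ (2 * m + t) ≤ 0.0147 / 3 ^ (2 * m) := by
    gcongr
    · linarith [dirichletLambda_four_mem_Icc.2]
    · norm_num
    · omega
  have hpow : (0.0147 : ℝ) / 3 ^ (2 * m) = 0.0147 * (1 / 9) ^ m := by
    rw [pow_mul, div_pow, one_pow, mul_one_div]; norm_num
  rw [show 2 * m + 4 + t = 4 + (2 * m + t) by ring]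
  linarith

lemma dirichletLambda_mul_mem_Icc {t m : ℕ} (hs : 2 * m + 4 ≤ s) (ht : 2 * m + 4 ≤ t) :
    dirichletLambda s * dirichletLambda t ∈ Set.Icc 1 (1 + 0.03 * (1 / 9) ^ m) := by
  have hs1 := one_le_dirichletLambda (s := s) (by omega)
  have ht1 := one_le_dirichletLambda (s := t) (by omega)
  have hd0 : (0 : ℝ) < (1 / 9) ^ m := by positivity
  have hd1 : (1 / 9 : ℝ) ^ m ≤ 1 := pow_le_one₀ (by norm_num) (by norm_num)
  refine ⟨one_le_mul_of_one_le_of_one_le hs1 ht1, ?_⟩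
  calc dirichletLambda s * dirichletLambda t
      ≤ (1 + 0.0147 * (1 / 9) ^ m) * (1 + 0.0147 * (1 / 9) ^ m) :=
        mul_le_mul (dirichletLambda_le hs) (dirichletLambda_le ht) (by linarith) (by positivity)
    _ ≤ 1 + 0.03 * (1 / 9) ^ m := by nlinarith

end DirichletLambda

section LambdaPoly

/-- The coefficient of `z ^ (2 * j)`, for `j ≤ k`, of `Q_k` divided by `(-1) ^ k * 2 ^ (2 * k - 1)`,
expressed through the Dirichlet lambda function instead of Bernoulli numbers. -/
noncomputable def lambdaCoeff (k j : ℕ) : ℝ :=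
  4 / π * ((-1) ^ j * (dirichletLambda (2 * j) * dirichletLambda (2 * k - 2 * j)))

/-- The polynomial `Q_k` divided by `(-1) ^ k * 2 ^ (2 * k - 1)`. -/
noncomputable def lambdaPoly (k : ℕ) : ℂ[X] :=
  C (dirichletLambda (2 * k - 1) : ℂ) * (X + C ((-1) ^ k) * X ^ (2 * k - 1)) +
    ∑ j ∈ Finset.range (k + 1), C (lambdaCoeff k j : ℂ) * X ^ (2 * j)

/-- The coefficient of `z ^ (2 * i + 2)`, for `i < k`, of `(1 + z ^ 2) * lambdaPoly k` without its
`dirichletLambda (2 * k - 1)` part. -/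
noncomputable def lambdaHalfCoeff (k i : ℕ) : ℝ := lambdaCoeff k i + lambdaCoeff k (i + 1)

/-- The polynomial `h` with `(1 + z ^ 2) * lambdaPoly k = z * (h + (-1) ^ k * h*)`, where `h*` is
the conjugate reciprocal of `h` in formal degree `2 * k`. -/
noncomputable def lambdaHalf (k : ℕ) : ℂ[X] :=
  C (dirichletLambda (2 * k - 1) : ℂ) * (1 + X ^ 2) +
    ∑ i ∈ Finset.range (k / 2),
      C (lambdaHalfCoeff k i : ℂ) * X ^ (2 * i + 1)

variable {k : ℕ}

lemma lambdaCoeff_zero_right (k : ℕ) : lambdaCoeff k 0 = 0 := by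
  simp [lambdaCoeff, dirichletLambda_zero]

lemma lambdaCoeff_self (k : ℕ) : lambdaCoeff k k = 0 := by
  simp [lambdaCoeff, dirichletLambda_zero]

lemma lambdaCoeff_one (k : ℕ) : lambdaCoeff k 1 = -(π / 2 * dirichletLambda (2 * k - 2)) := by
  rw [lambdaCoeff, mul_one, dirichletLambda_two]
  field_simp
  ring

lemma lambdaCoeff_sub {j : ℕ} (hj : j ≤ k) :
    lambdaCoeff k (k - j) = (-1) ^ k * lambdaCoeff k j := by
  obtain ⟨i, rfl⟩ := Nat.exists_eq_add_of_le hj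
  have hsign : ((-1 : ℝ) ^ j) * (-1) ^ j = 1 := by simp [← mul_pow]
  simp only [lambdaCoeff, show j + i - j = i by omega, show 2 * (j + i) - 2 * i = 2 * j by omega,
    show 2 * (j + i) - 2 * j = 2 * i by omega, pow_add]
  linear_combination
    -(4 / π * (-1) ^ i * dirichletLambda (2 * i) * dirichletLambda (2 * j)) * hsign

lemma Qpoly_coeff_eq_lambdaCoeff {j : ℕ} (hk : k ≠ 0) (hj : j ≤ k) :
    (2 * π) ^ (2 * k - 1) / (2 * k).factorial * ((-1 : ℝ) ^ j * bernoulli (2 * j) *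
        bernoulli (2 * k - 2 * j) * (2 ^ (2 * j) - 1) * (2 ^ (2 * k - 2 * j) - 1) *
        (2 * k).choose (2 * j)) =
      (-1) ^ k * 2 ^ (2 * k - 1) * lambdaCoeff k j := by
  obtain ⟨i, rfl⟩ := Nat.exists_eq_add_of_le hj
  have hsub : 2 * (j + i) - 2 * j = 2 * i := by omega
  have hchoose : (2 * (j + i)).factorial =
      ((2 * (j + i)).choose (2 * j) : ℝ) * (2 * j).factorial * (2 * i).factorial := by
    rw [← hsub]
    exact_mod_cast (Nat.choose_mul_factorial_mul_factorial (by omega : 2 * j ≤ 2 * (j + i))).symm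
  have hchoose0 : ((2 * (j + i)).choose (2 * j) : ℝ) ≠ 0 := by
    exact_mod_cast (Nat.choose_pos (by omega)).ne'
  have hpi : (2 * π) ^ (2 * (j + i) - 1) * π =
      2 ^ (2 * (j + i) - 1) * (π ^ (2 * j) * π ^ (2 * i)) := by
    rw [← pow_add, ← mul_add, mul_pow, mul_assoc, pow_sub_one_mul (by omega)]
  rw [lambdaCoeff, hsub]
  calc (2 * π) ^ (2 * (j + i) - 1) / (2 * (j + i)).factorial * ((-1 : ℝ) ^ j * bernoulli (2 * j) *
        bernoulli (2 * i) * (2 ^ (2 * j) - 1) * (2 ^ (2 * i) - 1) * (2 * (j + i)).choose (2 * j))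
      = (2 * π) ^ (2 * (j + i) - 1) / (2 * (j + i)).factorial * (-1) ^ j *
          (bernoulli (2 * j) * (2 ^ (2 * j) - 1)) * (bernoulli (2 * i) * (2 ^ (2 * i) - 1)) *
          (2 * (j + i)).choose (2 * j) := by ring
    _ = (-1) ^ (j + i) * 2 ^ (2 * (j + i) - 1) * (4 / π * ((-1) ^ j *
          (dirichletLambda (2 * j) * dirichletLambda (2 * i)))) := by
        rw [bernoulli_mul_two_pow_sub_one, bernoulli_mul_two_pow_sub_one, hchoose]
        field_simp
        linear_combination (4 * dirichletLambda (2 * j) * dirichletLambda (2 * i) *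
          (-1) ^ j * (-1) ^ i) * hpi

lemma Qpoly_eq_C_mul_lambdaPoly (hk : 2 ≤ k) :
    Qpoly k = C ((-1) ^ k * 2 ^ (2 * k - 1)) * lambdaPoly k := by
  have hzeta : (zetaVal (2 * k - 1) : ℂ) * (2 ^ (2 * k - 1) - 1) =
      2 ^ (2 * k - 1) * dirichletLambda (2 * k - 1) := by
    exact_mod_cast zetaVal_mul_two_pow_sub_one (by omega : 1 < 2 * k - 1)
  have hsign : C ((-1 : ℂ) ^ k) * C ((-1) ^ k) = 1 := by rw [← C_mul, ← mul_pow]; simp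
  rw [Qpoly, lambdaPoly, hzeta, add_comm, mul_add (C ((-1 : ℂ) ^ k * _)), Finset.mul_sum,
    Finset.mul_sum]
  congr 1
  · simp only [C_mul]
    linear_combination
      -C (2 ^ (2 * k - 1)) * C (dirichletLambda (2 * k - 1) : ℂ) * X ^ (2 * k - 1) * hsign
  · refine Finset.sum_congr rfl fun j hj => ?_
    rw [← mul_assoc, ← mul_assoc, ← C_mul, ← C_mul]
    congr 2
    exact_mod_cast congrArg (Complex.ofReal) (Qpoly_coeff_eq_lambdaCoeff (by omega : k ≠ 0)
      (Finset.mem_range_succ_iff.1 hj))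

lemma natDegree_lambdaHalf_lt (hk : 2 ≤ k) : (lambdaHalf k).natDegree < 2 * k := by
  have hlead : (C (dirichletLambda (2 * k - 1) : ℂ) * (1 + X ^ 2)).natDegree ≤ 2 * k - 1 := by
    have : (C (dirichletLambda (2 * k - 1) : ℂ) * (1 + X ^ 2)).natDegree ≤ 2 := by compute_degree
    omega
  have hsum : (∑ i ∈ Finset.range (k / 2),
      C (lambdaHalfCoeff k i : ℂ) * X ^ (2 * i + 1)).natDegree ≤
        2 * k - 1 := by
    refine natDegree_sum_le_of_forall_le _ _ fun i hi => (natDegree_C_mul_X_pow_le _ _).trans ?_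
    have := Finset.mem_range.1 hi
    omega
  have := natDegree_add_le_of_degree_le hlead hsum
  rw [lambdaHalf]
  omega

lemma sum_range_eq_sum_range_half {M : Type*} [AddCommMonoid M] (f : ℕ → M) {n : ℕ}
    (hmid : Odd n → f (n / 2) = 0) :
    ∑ i ∈ Finset.range n, f i = ∑ i ∈ Finset.range (n / 2), (f i + f (n - 1 - i)) := by
  obtain ⟨m, rfl | rfl⟩ := n.even_or_odd'
  · rw [two_mul, Finset.sum_range_add, ← Finset.sum_range_reflect (fun i => f (m + i)),
      ← Finset.sum_add_distrib, show (m + m) / 2 = m by omega]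
    refine Finset.sum_congr rfl fun i hi => ?_
    have := Finset.mem_range.1 hi
    rw [show m + (m - 1 - i) = m + m - 1 - i by omega]
  · have hhalf : (2 * m + 1) / 2 = m := by omega
    rw [hhalf] at hmid ⊢
    rw [show 2 * m + 1 = m + 1 + m by omega, Finset.sum_range_add, Finset.sum_range_succ,
      hmid ⟨m, rfl⟩, add_zero, ← Finset.sum_range_reflect (fun i => f (m + 1 + i)),
      ← Finset.sum_add_distrib]
    refine Finset.sum_congr rfl fun i hi => ?_
    have := Finset.mem_range.1 hi
    rw [show m + 1 + (m - 1 - i) = m + 1 + m - 1 - i by omega]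

lemma one_add_X_sq_mul_sum_lambdaCoeff (k : ℕ) :
    (1 + X ^ 2) * ∑ j ∈ Finset.range (k + 1), C (lambdaCoeff k j : ℂ) * X ^ (2 * j) =
      ∑ i ∈ Finset.range k,
        C (lambdaHalfCoeff k i : ℂ) * X ^ (2 * i + 2) := by
  rw [add_mul, one_mul]
  nth_rewrite 1 [Finset.sum_range_succ']
  rw [Finset.sum_range_succ, lambdaCoeff_zero_right, lambdaCoeff_self]
  simp only [lambdaHalfCoeff, Complex.ofReal_zero, C_0, zero_mul, add_zero, Complex.ofReal_add,
    C_add, Finset.mul_sum, ← Finset.sum_add_distrib]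
  exact Finset.sum_congr rfl fun i _ => by ring

lemma lambdaHalfCoeff_reflect {i : ℕ} (hi : i < k) :
    lambdaHalfCoeff k (k - 1 - i) = (-1) ^ k * lambdaHalfCoeff k i := by
  rw [lambdaHalfCoeff, lambdaHalfCoeff, show k - 1 - i + 1 = k - i by omega,
    show k - 1 - i = k - (i + 1) by omega, lambdaCoeff_sub hi, lambdaCoeff_sub hi.le]
  ring

lemma conjReflect_lambdaHalf (hk : 2 ≤ k) :
    conjReflect (2 * k) (lambdaHalf k) =
      C (dirichletLambda (2 * k - 1) : ℂ) * (X ^ (2 * k) + X ^ (2 * k - 2)) +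
        ∑ i ∈ Finset.range (k / 2),
          C (lambdaHalfCoeff k i : ℂ) * X ^ (2 * k - (2 * i + 1)) := by
  have hlead : C (dirichletLambda (2 * k - 1) : ℂ) * (1 + X ^ 2) =
      C (dirichletLambda (2 * k - 1) : ℂ) * X ^ 0 +
        C (dirichletLambda (2 * k - 1) : ℂ) * X ^ 2 := by ring
  rw [lambdaHalf, hlead, map_add, map_add, map_sum, conjReflect_C_mul_X_pow (by omega),
    conjReflect_C_mul_X_pow (by omega), Complex.conj_ofReal, mul_add, Nat.sub_zero]
  congr 1
  refine Finset.sum_congr rfl fun i hi => ?_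
  have := Finset.mem_range.1 hi
  rw [conjReflect_C_mul_X_pow (by omega), Complex.conj_ofReal]

lemma one_add_X_sq_mul_lambdaPoly (hk : 2 ≤ k) :
    (1 + X ^ 2) * lambdaPoly k =
      X * (lambdaHalf k + C ((-1) ^ k) * conjReflect (2 * k) (lambdaHalf k)) := by
  have hmid : Odd k → C (lambdaHalfCoeff k (k / 2) : ℂ) *
      X ^ (2 * (k / 2) + 2) = 0 := by
    rintro ⟨m, rfl⟩
    have h := lambdaHalfCoeff_reflect (k := 2 * m + 1) (i := m) (by omega)
    rw [show 2 * m + 1 - 1 - m = m by omega, Odd.neg_one_pow ⟨m, rfl⟩] at h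
    rw [show (2 * m + 1) / 2 = m by omega,
      show lambdaHalfCoeff (2 * m + 1) m = 0 by linarith]
    simp
  have hsum : (1 + X ^ 2) * ∑ j ∈ Finset.range (k + 1), C (lambdaCoeff k j : ℂ) * X ^ (2 * j) =
      X * (∑ i ∈ Finset.range (k / 2),
          C (lambdaHalfCoeff k i : ℂ) * X ^ (2 * i + 1) +
        C ((-1) ^ k) * ∑ i ∈ Finset.range (k / 2),
          C (lambdaHalfCoeff k i : ℂ) * X ^ (2 * k - (2 * i + 1))) := by
    rw [one_add_X_sq_mul_sum_lambdaCoeff, sum_range_eq_sum_range_half _ hmid, mul_add,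
      Finset.mul_sum, Finset.mul_sum, Finset.mul_sum, ← Finset.sum_add_distrib]
    refine Finset.sum_congr rfl fun i hi => ?_
    have := Finset.mem_range.1 hi
    rw [lambdaHalfCoeff_reflect (by omega),
      show 2 * (k - 1 - i) + 2 = 2 * k - (2 * i + 1) + 1 by omega, Complex.ofReal_mul, C_mul]
    push_cast
    ring
  rw [conjReflect_lambdaHalf hk, lambdaPoly, lambdaHalf, mul_add, hsum]
  obtain ⟨n, rfl⟩ := Nat.exists_eq_add_of_le hk
  rw [show 2 * (2 + n) - 1 = 2 * n + 3 by omega, show 2 * (2 + n) - 2 = 2 * n + 2 by omega]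
  ring

end LambdaPoly

section NonVanishing

variable {k : ℕ} {z : ℂ}

lemma norm_sum_mul_pow_le {R ι : Type*} [SeminormedRing R] [NormOneClass R] (s : Finset ι)
    (a : ι → R) (e : ι → ℕ) {x : R} (hx : ‖x‖ ≤ 1) :
    ‖∑ i ∈ s, a i * x ^ e i‖ ≤ ∑ i ∈ s, ‖a i‖ :=
  norm_sum_le_of_le s fun _ _ => (norm_mul_le _ _).trans <|
    mul_le_of_le_one_right (norm_nonneg _) <|
      (norm_pow_le _ _).trans (pow_le_one₀ (norm_nonneg _) hx)

lemma eval_C_add_C_mul_X_ne_zero {K : Type*} [NormedField K] {a b x : K} (hab : ‖b‖ < ‖a‖)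
    (hx : ‖x‖ ≤ 1) : (C a + C b * X).eval x ≠ 0 := by
  simp only [eval_add, eval_mul, eval_C, eval_X]
  intro h
  have hnorm : ‖a‖ = ‖b‖ * ‖x‖ := by rw [eq_neg_of_add_eq_zero_left h, norm_neg, norm_mul]
  exact hab.not_ge (hnorm.trans_le (mul_le_of_le_one_right (norm_nonneg _) hx))

lemma four_div_pi_mem_Icc : 4 / π ∈ Set.Icc 1.273 1.2734 := by
  have hlo := pi_gt_d4
  have hhi := pi_lt_d4
  constructor
  · rw [le_div_iff₀ pi_pos]; linarith
  · rw [div_le_iff₀ pi_pos]; linarith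

lemma dirichletLambda_mem_Icc_of_six_le {s : ℕ} (hs : 6 ≤ s) :
    dirichletLambda s ∈ Set.Icc 1 1.002 :=
  ⟨one_le_dirichletLambda (by omega), by linarith [dirichletLambda_le (m := 1) hs]⟩

lemma lambdaCoeff_one_mem_Icc (hk : 4 ≤ k) : lambdaCoeff k 1 ∈ Set.Icc (-1.576) (-1.57) := by
  obtain ⟨hlo, hhi⟩ := dirichletLambda_mem_Icc_of_six_le (s := 2 * k - 2) (by omega)
  have hpi_lo := pi_gt_d4
  have hpi_hi := pi_lt_d4
  rw [lambdaCoeff_one]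
  constructor <;> nlinarith

lemma lambdaCoeff_two_mem_Icc (hk : 4 ≤ k) : lambdaCoeff k 2 ∈ Set.Icc 1.29 1.312 := by
  obtain ⟨hlo, hhi⟩ := dirichletLambda_four_mem_Icc
  have hlo' := one_le_dirichletLambda (s := 2 * k - 4) (by omega)
  have hhi' := dirichletLambda_le (m := 0) (s := 2 * k - 4) (by omega)
  obtain ⟨hpi_lo, hpi_hi⟩ := four_div_pi_mem_Icc
  norm_num at hhi'
  have hprod_lo : 1.0145 * 1 ≤ dirichletLambda 4 * dirichletLambda (2 * k - 4) := by gcongr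
  have hprod_hi : dirichletLambda 4 * dirichletLambda (2 * k - 4) ≤ 1.0147 * 1.0147 := by
    gcongr; linarith
  simp only [lambdaCoeff, show 2 * 2 = 4 by rfl, neg_one_sq, one_mul]
  constructor <;> nlinarith

lemma abs_lambdaHalfCoeff_zero_add_le (hk : 4 ≤ k) : |lambdaHalfCoeff k 0 + 1.57| ≤ 0.01 := by
  obtain ⟨hlo, hhi⟩ := lambdaCoeff_one_mem_Icc hk
  rw [lambdaHalfCoeff, lambdaCoeff_zero_right, abs_le]
  constructor <;> linarith

lemma abs_lambdaHalfCoeff_one_add_le (hk : 4 ≤ k) : |lambdaHalfCoeff k 1 + 0.27| ≤ 0.02 := by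
  obtain ⟨hlo₁, hhi₁⟩ := lambdaCoeff_one_mem_Icc hk
  obtain ⟨hlo₂, hhi₂⟩ := lambdaCoeff_two_mem_Icc hk
  rw [lambdaHalfCoeff, abs_le]
  constructor <;> linarith

lemma abs_lambdaHalfCoeff_add_two_le {n : ℕ} (hn : n + 2 < k / 2) :
    |lambdaHalfCoeff k (n + 2)| ≤ 0.04 * (1 / 9) ^ n := by
  obtain ⟨hlo, hhi⟩ := dirichletLambda_mul_mem_Icc (s := 2 * (n + 2))
    (t := 2 * k - 2 * (n + 2)) (m := n) (by omega) (by omega)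
  obtain ⟨hlo', hhi'⟩ := dirichletLambda_mul_mem_Icc (s := 2 * (n + 2 + 1))
    (t := 2 * k - 2 * (n + 2 + 1)) (m := n) (by omega) (by omega)
  have hfactor : lambdaHalfCoeff k (n + 2) = 4 / π * (-1) ^ (n + 2) *
      (dirichletLambda (2 * (n + 2)) * dirichletLambda (2 * k - 2 * (n + 2)) -
        dirichletLambda (2 * (n + 2 + 1)) * dirichletLambda (2 * k - 2 * (n + 2 + 1))) := by
    rw [lambdaHalfCoeff, lambdaCoeff, lambdaCoeff]
    ring
  rw [hfactor, abs_mul, abs_mul, abs_neg_one_pow, mul_one, abs_of_pos (by positivity)]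
  calc 4 / π * |_ - _| ≤ 1.2734 * (0.03 * (1 / 9) ^ n) := by
        gcongr
        · exact four_div_pi_mem_Icc.2
        · rw [abs_le]; constructor <;> linarith
    _ ≤ 0.04 * (1 / 9) ^ n := by rw [← mul_assoc]; gcongr; norm_num

lemma sum_abs_lambdaHalfCoeff_add_two_le {m : ℕ} (hm : m + 2 = k / 2) :
    ∑ n ∈ Finset.range m, |lambdaHalfCoeff k (n + 2)| ≤ 0.045 := by
  have hgeom : HasSum (fun n : ℕ => 0.04 * (1 / 9 : ℝ) ^ n) 0.045 := by
    have h := (hasSum_geometric_of_lt_one (r := (1 / 9 : ℝ)) (by norm_num) (by norm_num)).mul_left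
      0.04
    norm_num at h ⊢
    exact h
  refine (Finset.sum_le_sum fun n hn => abs_lambdaHalfCoeff_add_two_le ?_).trans
    (sum_le_hasSum _ (fun n _ => by positivity) hgeom)
  have := Finset.mem_range.1 hn
  omega

/-- The limit of `lambdaHalf k` as `k → ∞`, cut off after `z ^ 3` and with coefficients rounded to
within `0.01`. -/
noncomputable def lambdaHalfModel (z : ℂ) : ℂ := 1 - 1.57 * z + z ^ 2 - 0.27 * z ^ 3

/-- The Taylor polynomial of degree `5` of `1 / lambdaHalfModel`, with rounded coefficients. -/
noncomputable def lambdaHalfModelInv (z : ℂ) : ℂ :=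
  1 + 1.57 * z + 1.46 * z ^ 2 + z ^ 3 + 0.53 * z ^ 4 + 0.22 * z ^ 5

lemma norm_lambdaHalfModelInv_le (hz : ‖z‖ ≤ 1) : ‖lambdaHalfModelInv z‖ ≤ 6 := by
  have hexpand : lambdaHalfModelInv z =
      ∑ i : Fin 6, ![1, 1.57, 1.46, 1, 0.53, 0.22] i * z ^ (i : ℕ) := by
    simp [lambdaHalfModelInv, Fin.sum_univ_six]
  rw [hexpand]
  refine (norm_sum_mul_pow_le _ _ _ hz).trans ?_
  norm_num [Fin.sum_univ_succ]

lemma norm_one_sub_lambdaHalfModel_mul_inv_le (hz : ‖z‖ ≤ 1) :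
    ‖1 - lambdaHalfModel z * lambdaHalfModelInv z‖ ≤ 0.3 := by
  have hexpand : 1 - lambdaHalfModel z * lambdaHalfModelInv z = ∑ i : Fin 7,
      ![0.0049, -0.0078, 0.0039, 0.0063, 0.0854, -0.0769, 0.0594] i * z ^ ((i : ℕ) + 2) := by
    simp only [lambdaHalfModel, lambdaHalfModelInv, Fin.sum_univ_seven, Matrix.cons_val,
      Fin.coe_ofNat_eq_mod, Nat.reduceMod]
    ring
  rw [hexpand]
  refine (norm_sum_mul_pow_le _ _ _ hz).trans ?_
  norm_num [Fin.sum_univ_succ]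

lemma norm_eval_lambdaHalf_sub_model_le (hk : 4 ≤ k) (hz : ‖z‖ ≤ 1) :
    ‖(lambdaHalf k).eval z - lambdaHalfModel z‖ ≤ 0.1 := by
  obtain ⟨m, hm⟩ := Nat.exists_eq_add_of_le' (by omega : 2 ≤ k / 2)
  set l := dirichletLambda (2 * k - 1) with hl
  let low : Fin 4 → ℝ := ![l - 1, lambdaHalfCoeff k 0 + 1.57, l - 1, lambdaHalfCoeff k 1 + 0.27]
  have hsplit : (lambdaHalf k).eval z - lambdaHalfModel z =
      ∑ i, (low i : ℂ) * z ^ (i : ℕ) +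
        ∑ n ∈ Finset.range m, (lambdaHalfCoeff k (n + 2) : ℂ) * z ^ (2 * (n + 2) + 1) := by
    rw [lambdaHalf, hm, Finset.sum_range_succ', Finset.sum_range_succ', lambdaHalfModel]
    simp only [eval_add, eval_mul, eval_C, eval_X, eval_pow, eval_one, eval_finsetSum]
    simp only [low, Fin.sum_univ_four, Matrix.cons_val, Fin.coe_ofNat_eq_mod, Nat.reduceMod, ← hl]
    push_cast
    ring
  have hlow : ∑ i, ‖(low i : ℂ)‖ ≤ 0.002 + 0.01 + 0.002 + 0.02 := by
    have hl_sub : |l - 1| ≤ 0.002 := by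
      obtain ⟨hlo, hhi⟩ := dirichletLambda_mem_Icc_of_six_le (by omega : 6 ≤ 2 * k - 1)
      rw [abs_le]
      constructor <;> linarith
    simp only [Complex.norm_real, Fin.sum_univ_four]
    exact add_le_add (add_le_add (add_le_add hl_sub (abs_lambdaHalfCoeff_zero_add_le hk)) hl_sub)
      (abs_lambdaHalfCoeff_one_add_le hk)
  have htail : ∑ n ∈ Finset.range m, ‖(lambdaHalfCoeff k (n + 2) : ℂ)‖ ≤ 0.045 := by
    simpa only [Complex.norm_real, Real.norm_eq_abs] using
      sum_abs_lambdaHalfCoeff_add_two_le hm.symm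
  rw [hsplit]
  refine (norm_add_le_of_le ((norm_sum_mul_pow_le _ _ _ hz).trans hlow)
    ((norm_sum_mul_pow_le _ _ _ hz).trans htail)).trans ?_
  norm_num

lemma eval_lambdaHalf_ne_zero (hk : 4 ≤ k) (hz : ‖z‖ ≤ 1) : (lambdaHalf k).eval z ≠ 0 := by
  intro h
  have hclose := norm_eval_lambdaHalf_sub_model_le hk hz
  rw [h, zero_sub, norm_neg] at hclose
  have hone : ‖(1 : ℂ)‖ ≤ 0.3 + 0.1 * 6 := by
    refine (norm_le_norm_sub_add 1 (lambdaHalfModel z * lambdaHalfModelInv z)).trans ?_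
    rw [norm_mul]
    gcongr
    · exact norm_one_sub_lambdaHalfModel_mul_inv_le hz
    · exact norm_lambdaHalfModelInv_le hz
  norm_num at hone

end NonVanishing

section Factorization

lemma conjReflect_C_add_C_mul_X {N : ℕ} (hN : 1 ≤ N) (a b : ℂ) :
    conjReflect N (C a + C b * X) = C (conj a) * X ^ N + C (conj b) * X ^ (N - 1) := by
  have h : C a + C b * X = C a * X ^ 0 + C b * X ^ 1 := by ring
  rw [h, map_add, conjReflect_C_mul_X_pow N.zero_le, conjReflect_C_mul_X_pow hN, Nat.sub_zero]

lemma lambdaPoly_two :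
    lambdaPoly 2 = X * (C (dirichletLambda 3 : ℂ) + C ((lambdaCoeff 2 1 / 2 : ℝ) : ℂ) * X +
      C 1 * conjReflect 2
        (C (dirichletLambda 3 : ℂ) + C ((lambdaCoeff 2 1 / 2 : ℝ) : ℂ) * X)) := by
  have hhalf : C (lambdaCoeff 2 1 : ℂ) = 2 * C ((lambdaCoeff 2 1 / 2 : ℝ) : ℂ) := by
    rw [← C_ofNat, ← C_mul]
    push_cast
    ring_nf
  rw [conjReflect_C_add_C_mul_X one_le_two, Complex.conj_ofReal, Complex.conj_ofReal, lambdaPoly]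
  simp only [Finset.sum_range_succ, Finset.sum_range_zero, lambdaCoeff_zero_right,
    lambdaCoeff_self, hhalf, Complex.ofReal_zero, C_0, even_two.neg_one_pow, C_1]
  ring

lemma mul_lambdaPoly_three {a l : ℝ} (ha : lambdaCoeff 3 1 = a) (hl : dirichletLambda 5 = l) :
    (C (a : ℂ) - C (l : ℂ) * X + C (a : ℂ) * X ^ 2) * lambdaPoly 3 =
      X * (C ((a * l : ℝ) : ℂ) + C ((a ^ 2 - l ^ 2 : ℝ) : ℂ) * X +
        C (-1) * conjReflect 6
          (C ((a * l : ℝ) : ℂ) + C ((a ^ 2 - l ^ 2 : ℝ) : ℂ) * X)) := by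
  have ha' : lambdaCoeff 3 2 = -a := by
    rw [show 2 = 3 - 1 by rfl, lambdaCoeff_sub (by norm_num), ha]
    norm_num
  rw [conjReflect_C_add_C_mul_X (by norm_num), Complex.conj_ofReal, Complex.conj_ofReal,
    lambdaPoly]
  simp only [Finset.sum_range_succ, Finset.sum_range_zero, lambdaCoeff_zero_right,
    lambdaCoeff_self, ha, ha', show 2 * 3 - 1 = 5 by rfl, hl, Complex.ofReal_zero,
    Complex.ofReal_neg, Complex.ofReal_mul, Complex.ofReal_sub, Complex.ofReal_pow, C_0, C_neg,
    C_mul, C_sub, C_pow, C_1]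
  ring

lemma abs_lambdaCoeff_two_one_div_two_lt : |lambdaCoeff 2 1 / 2| < dirichletLambda 3 := by
  have hcube : π ^ 3 < 32 := by
    calc π ^ 3 < 3.1416 ^ 3 := by gcongr; exact pi_lt_d4
      _ < 32 := by norm_num
  have hvalue : lambdaCoeff 2 1 / 2 = -(π ^ 3 / 32) := by
    rw [lambdaCoeff_one, dirichletLambda_two]
    ring
  rw [hvalue, abs_neg, abs_of_pos (by positivity)]
  linarith [one_le_dirichletLambda (s := 3) (by norm_num)]

lemma abs_sq_sub_sq_lt_abs_mul {a l : ℝ} (hla : l ≤ |a|) (hal : |a| ≤ 1.6 * l) (hl : 0 < l) :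
    |a ^ 2 - l ^ 2| < |a * l| := by
  rw [← sq_abs a, abs_mul, abs_of_pos hl, abs_lt]
  constructor <;> nlinarith

lemma abs_lambdaCoeff_three_one_mem_Icc :
    |lambdaCoeff 3 1| ∈ Set.Icc (dirichletLambda 5) (1.6 * dirichletLambda 5) := by
  have hvalue : |lambdaCoeff 3 1| = π / 2 * dirichletLambda 4 := by
    rw [lambdaCoeff_one, abs_neg, abs_of_nonneg]
    exact mul_nonneg (by positivity) (by linarith [dirichletLambda_four_mem_Icc.1])
  obtain ⟨hlo₄, hhi₄⟩ := dirichletLambda_four_mem_Icc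
  have hlo₅ := one_le_dirichletLambda (s := 5) (by norm_num)
  have hhi₅ := dirichletLambda_le (m := 0) (s := 5) (by norm_num)
  have hpi_lo := pi_gt_d4
  have hpi_hi := pi_lt_d4
  rw [hvalue]
  constructor <;> nlinarith

lemma exists_lambdaPoly_dvd {k : ℕ} (hk : 2 ≤ k) :
    ∃ (f : ℂ[X]) (N : ℕ) (ε : ℂ), ‖ε‖ = 1 ∧ f.natDegree < N ∧
      (∀ z : ℂ, ‖z‖ ≤ 1 → f.eval z ≠ 0) ∧ lambdaPoly k ∣ X * (f + C ε * conjReflect N f) := by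
  have hlin {N : ℕ} (hN : 1 < N) (a b : ℂ) : (C a + C b * X).natDegree < N := by
    rw [add_comm]
    exact natDegree_linear_le.trans_lt hN
  obtain rfl | rfl | hk4 : k = 2 ∨ k = 3 ∨ 4 ≤ k := by omega
  · refine ⟨_, 2, 1, norm_one, hlin one_lt_two _ _, fun z => eval_C_add_C_mul_X_ne_zero ?_,
      dvd_of_eq lambdaPoly_two⟩
    rw [Complex.norm_real, Complex.norm_real]
    exact abs_lambdaCoeff_two_one_div_two_lt.trans_le (le_abs_self _)
  · refine ⟨_, 6, -1, by simp, hlin (by norm_num) _ _, fun z => eval_C_add_C_mul_X_ne_zero ?_,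
      Dvd.intro_left _ (mul_lambdaPoly_three rfl rfl)⟩
    rw [Complex.norm_real, Complex.norm_real]
    obtain ⟨hlo, hhi⟩ := abs_lambdaCoeff_three_one_mem_Icc
    exact abs_sq_sub_sq_lt_abs_mul hlo hhi
      (one_pos.trans_le (one_le_dirichletLambda (by norm_num)))
  · exact ⟨lambdaHalf k, 2 * k, (-1) ^ k, by simp, natDegree_lambdaHalf_lt hk,
      fun z => eval_lambdaHalf_ne_zero hk4, Dvd.intro_left _ (one_add_X_sq_mul_lambdaPoly hk)⟩

end Factorization

/-- Every non-zero complex root of `Q_k` lies on the unit circle,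
and all roots of `Q_k` are simple. -/
theorem Qpoly_roots_on_unit_circle_and_simple (k : ℕ) (hk : 2 ≤ k) :
    (∀ z : ℂ, (Qpoly k).IsRoot z → z ≠ 0 → ‖z‖ = 1) ∧
    (∀ z : ℂ, (Qpoly k).IsRoot z → Polynomial.rootMultiplicity z (Qpoly k) = 1) := by
  obtain ⟨f, N, ε, hε, hN, hroots, hdvd⟩ := exists_lambdaPoly_dvd hk
  have hQdvd : Qpoly k ∣ X * (f + C ε * conjReflect N f) := by
    rwa [Qpoly_eq_C_mul_lambdaPoly hk, C_mul_dvd (by simp)]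
  have hsep : (Qpoly k).Separable :=
    (separable_X_mul_add_conjReflect hε hN hroots).of_dvd hQdvd
  refine ⟨fun z hz hz0 => ?_, fun z hz => le_antisymm ?_ ?_⟩
  · have hz' := hz.dvd hQdvd
    rw [IsRoot.def, eval_mul, eval_X] at hz'
    exact norm_eq_one_of_eval_add_conjReflect_eq_zero hε hN hroots
      ((mul_eq_zero.1 hz').resolve_left hz0)
  · exact rootMultiplicity_le_one_of_separable hsep z
  · exact (rootMultiplicity_pos hsep.ne_zero).2 hz
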